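/- arXiv:2507.08622 — 4 statements merged into one kernel-verified Lean document; each statement's English description precedes it below -/
import Mathlib

section
/- Let μ, σ, L > 0 satisfy σ² > μL. Suppose α ∈ (0, π/2) satisfies tan α = (σ²/(μL))·α, and set λ₁ = α²σ²/(2L²) + μ²/(2σ²). Then μ − 2λ₁L ≤ 0. -/
/-- If `tan α = k * α` with `0 < α < π / 2`, then `k ≤ 1 + (k * α) ^ 2`;
this is `sin (2 * α) ≤ 2 * α` in disguise. -/
theorem le_one_add_sq_of_tan_eq_mul {k α : ℝ} (hα0 : 0 < α) (hα1 : α < Real.pi / 2)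
    (htan : Real.tan α = k * α) : k ≤ 1 + (k * α) ^ 2 := by
  have hc : 0 < Real.cos α := Real.cos_pos_of_mem_Ioo ⟨by linarith [Real.pi_pos], hα1⟩
  have hs : Real.sin α = k * α * Real.cos α := by
    rw [← htan, Real.tan_mul_cos hc.ne']
  have hsq : (1 + (k * α) ^ 2) * Real.cos α ^ 2 = 1 := by
    have h := Real.sin_sq_add_cos_sq α
    rw [hs] at h
    linarith
  have hsin : Real.sin (2 * α) ≤ 2 * α := Real.sin_le (by linarith)
  rw [Real.sin_two_mul, hs] at hsin
  have hk : k * Real.cos α ^ 2 ≤ 1 := by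
    refine le_of_mul_le_mul_left ?_ hα0
    linarith
  exact le_of_mul_le_mul_right (hk.trans hsq.ge) (pow_pos hc 2)

theorem stmt_0 (μ σ L α lam : ℝ) (hμ : 0 < μ) (hσ : 0 < σ) (hL : 0 < L)
    (hreg : σ ^ 2 > μ * L)
    (hα0 : 0 < α) (hα1 : α < Real.pi / 2)
    (htan : Real.tan α = (σ ^ 2 / (μ * L)) * α)
    (hlam : lam = α ^ 2 * σ ^ 2 / (2 * L ^ 2) + μ ^ 2 / (2 * σ ^ 2)) :
    μ - 2 * lam * L ≤ 0 := by
  have hk := le_one_add_sq_of_tan_eq_mul hα0 hα1 htan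
  have hfactor : μ - 2 * lam * L = μ ^ 2 * L / σ ^ 2 *
      (σ ^ 2 / (μ * L) - (1 + (σ ^ 2 / (μ * L) * α) ^ 2)) := by
    rw [hlam]
    field_simp
    ring
  rw [hfactor]
  exact mul_nonpos_of_nonneg_of_nonpos (by positivity) (by linarith)
end

section
/- Let μ ≥ 0, σ > 0, L > 0 with σ² ≥ μL, let z ∈ (0, L], and let α, α₁ be reals with 0 < α₁ ≤ α and −μL + α₁²σ² + μ²L²/σ² > 0. Then |2 · (ασ²/(−μL + α²σ² + μ²L²/σ²)) · exp(−μz/σ²) · sin(αz/L)| ≤ 2 · (z/L) · (α₁²σ²/(−μL + α₁²σ² + μ²L²/σ²)) · exp(−μz/σ²). -/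
/-- For `c ≤ 0`, the map `a ↦ a / (c + a)` is antitone where the denominator is positive. -/
theorem div_add_self_le_div_add_self {a b c : ℝ} (hc : c ≤ 0) (hba : b ≤ a) (hb : 0 < c + b) :
    a / (c + a) ≤ b / (c + b) := by
  rw [div_le_div_iff₀ (by linarith) hb]
  nlinarith [mul_nonneg (neg_nonneg.2 hc) (sub_nonneg.2 hba)]

theorem stmt_3 (μ σ L z α α₁ : ℝ) (hμ : 0 ≤ μ) (hσ : 0 < σ) (hL : 0 < L)
    (hreg : σ ^ 2 ≥ μ * L) (hz0 : 0 < z) (hzL : z ≤ L)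
    (hα₁ : 0 < α₁) (hαα : α₁ ≤ α)
    (hden : -μ * L + α₁ ^ 2 * σ ^ 2 + μ ^ 2 * L ^ 2 / σ ^ 2 > 0) :
    |2 * (α * σ ^ 2 / (-μ * L + α ^ 2 * σ ^ 2 + μ ^ 2 * L ^ 2 / σ ^ 2)) *
        Real.exp (-μ * z / σ ^ 2) * Real.sin (α * z / L)| ≤
      2 * (z / L) * (α₁ ^ 2 * σ ^ 2 / (-μ * L + α₁ ^ 2 * σ ^ 2 + μ ^ 2 * L ^ 2 / σ ^ 2)) *
        Real.exp (-μ * z / σ ^ 2) := by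
  have hα : 0 < α := hα₁.trans_le hαα
  have hc : -μ * L + μ ^ 2 * L ^ 2 / σ ^ 2 ≤ 0 := by
    have : μ ^ 2 * L ^ 2 / σ ^ 2 ≤ μ * L := by
      rw [div_le_iff₀ (by positivity)]
      nlinarith [mul_le_mul_of_nonneg_left hreg (mul_nonneg hμ hL.le)]
    linarith
  have hmono : α₁ ^ 2 * σ ^ 2 ≤ α ^ 2 * σ ^ 2 := by gcongr
  rw [add_right_comm] at hden
  rw [add_right_comm _ (α ^ 2 * σ ^ 2), add_right_comm _ (α₁ ^ 2 * σ ^ 2)]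
  have hratio := div_add_self_le_div_add_self hc hmono hden
  generalize -μ * L + μ ^ 2 * L ^ 2 / σ ^ 2 = c at *
  have hD : 0 < c + α ^ 2 * σ ^ 2 := by linarith
  have hsin : |Real.sin (α * z / L)| ≤ α * z / L :=
    Real.abs_sin_le_abs.trans_eq (abs_of_pos (by positivity))
  rw [abs_mul, abs_of_pos (by positivity :
    0 < 2 * (α * σ ^ 2 / (c + α ^ 2 * σ ^ 2)) * Real.exp (-μ * z / σ ^ 2))]
  calc 2 * (α * σ ^ 2 / (c + α ^ 2 * σ ^ 2)) * Real.exp (-μ * z / σ ^ 2) *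
        |Real.sin (α * z / L)|
      ≤ 2 * (α * σ ^ 2 / (c + α ^ 2 * σ ^ 2)) * Real.exp (-μ * z / σ ^ 2) * (α * z / L) := by
        gcongr
    _ = 2 * (z / L) * (α ^ 2 * σ ^ 2 / (c + α ^ 2 * σ ^ 2)) * Real.exp (-μ * z / σ ^ 2) := by
        ring
    _ ≤ _ := by gcongr
end

section
/- Let μ, σ, L > 0, let v ∈ (0, μ), let z ∈ (0, L], and assume μσ² ≠ (μ² − v²)L. Then |(v/(μ − (μ² − v²)L/σ²)) · (exp(−(μ − v)z/σ²) − exp(−(μ + v)z/σ²))| ≤ 2 · (z/L) · exp(−μz/σ²) · sinh(vL/σ²) · (σ²v/|μσ² − (μ² − v²)L|). -/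
theorem convexOn_sinh_Ici : ConvexOn ℝ (Set.Ici 0) Real.sinh := by
  refine MonotoneOn.convexOn_of_deriv (convex_Ici 0) Real.continuous_sinh.continuousOn
    Real.differentiable_sinh.differentiableOn ?_
  rw [Real.deriv_sinh, interior_Ici]
  intro a ha b hb hab
  rw [Set.mem_Ioi] at ha hb
  rwa [Real.cosh_le_cosh, abs_of_pos ha, abs_of_pos hb]

theorem sinh_mul_le_mul_sinh {t x : ℝ} (ht0 : 0 ≤ t) (ht1 : t ≤ 1) (hx : 0 ≤ x) :
    Real.sinh (t * x) ≤ t * Real.sinh x := by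
  have h := convexOn_sinh_Ici.2 (Set.mem_Ici.2 hx) (Set.mem_Ici.2 le_rfl) ht0
    (sub_nonneg.2 ht1) (add_sub_cancel t 1)
  simpa using h

theorem exp_sub_exp_eq_two_mul_exp_mul_sinh (a b : ℝ) :
    Real.exp (a + b) - Real.exp (a - b) = 2 * Real.exp a * Real.sinh b := by
  rw [Real.sinh_eq, sub_eq_add_neg a b, Real.exp_add, Real.exp_add]
  ring

theorem stmt_6 (μ σ L v z : ℝ) (hμ : 0 < μ) (hσ : 0 < σ) (hL : 0 < L)
    (hv : v ∈ Set.Ioo 0 μ) (hz0 : 0 < z) (hzL : z ≤ L)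
    (hden : μ * σ ^ 2 ≠ (μ ^ 2 - v ^ 2) * L) :
    |(v / (μ - (μ ^ 2 - v ^ 2) * L / σ ^ 2)) *
        (Real.exp (-(μ - v) * z / σ ^ 2) - Real.exp (-(μ + v) * z / σ ^ 2))| ≤
      2 * (z / L) * Real.exp (-μ * z / σ ^ 2) * Real.sinh (v * L / σ ^ 2) *
        (σ ^ 2 * v / |μ * σ ^ 2 - (μ ^ 2 - v ^ 2) * L|) := by
  have hv0 : 0 < v := hv.1
  have hσ2 : 0 < σ ^ 2 := by positivity
  have hcoef : v / (μ - (μ ^ 2 - v ^ 2) * L / σ ^ 2) =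
      σ ^ 2 * v / (μ * σ ^ 2 - (μ ^ 2 - v ^ 2) * L) := by
    rw [sub_div' hσ2.ne', div_div_eq_mul_div, mul_comm v]
  have hexp : Real.exp (-(μ - v) * z / σ ^ 2) - Real.exp (-(μ + v) * z / σ ^ 2) =
      2 * Real.exp (-μ * z / σ ^ 2) * Real.sinh (v * z / σ ^ 2) := by
    rw [← exp_sub_exp_eq_two_mul_exp_mul_sinh]
    ring_nf
  have hsinh : Real.sinh (v * z / σ ^ 2) ≤ z / L * Real.sinh (v * L / σ ^ 2) := by
    have harg : v * z / σ ^ 2 = z / L * (v * L / σ ^ 2) := by field_simp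
    rw [harg]
    exact sinh_mul_le_mul_sinh (by positivity) ((div_le_one hL).2 hzL) (by positivity)
  have hsinh0 : 0 ≤ Real.sinh (v * z / σ ^ 2) := Real.sinh_nonneg_iff.2 (by positivity)
  rw [hcoef, hexp, abs_mul, abs_div, abs_of_pos (mul_pos hσ2 hv0),
    abs_of_nonneg (mul_nonneg (by positivity) hsinh0), mul_comm]
  refine mul_le_mul_of_nonneg_right ?_ (by positivity)
  calc 2 * Real.exp (-μ * z / σ ^ 2) * Real.sinh (v * z / σ ^ 2)
      ≤ 2 * Real.exp (-μ * z / σ ^ 2) * (z / L * Real.sinh (v * L / σ ^ 2)) := by gcongr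
    _ = 2 * (z / L) * Real.exp (-μ * z / σ ^ 2) * Real.sinh (v * L / σ ^ 2) := by ring
end

section
/- Let μ, σ, L > 0 with σ² < μL. Then there exists a unique v ∈ (0, μ) such that (σ²/(2L)) · ln((μ + v)/(μ − v)) = v. -/
/-- The difference of the two sides of the equation
`c * log ((μ + v) / (μ - v)) = v`, with the logarithm of the quotient split. -/
noncomputable def logRatioGap (c μ v : ℝ) : ℝ :=
  c * (Real.log (μ + v) - Real.log (μ - v)) - v

lemma hasDerivAt_logRatioGap {c μ v : ℝ} (h₁ : 0 < μ + v) (h₂ : 0 < μ - v) :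
    HasDerivAt (logRatioGap c μ) ((v ^ 2 - (μ ^ 2 - 2 * c * μ)) / (μ ^ 2 - v ^ 2)) v := by
  have hadd := ((hasDerivAt_id v).const_add μ).log h₁.ne'
  have hsub := ((hasDerivAt_id v).const_sub μ).log h₂.ne'
  refine (((hadd.sub hsub).const_mul c).sub (hasDerivAt_id v)).congr_deriv ?_
  have h₃ : μ ^ 2 - v ^ 2 ≠ 0 := by
    rw [sq_sub_sq]
    exact (mul_pos h₁ h₂).ne'
  have h₁' := h₁.ne'
  have h₂' := h₂.ne'
  simp only [id]
  field_simp
  ring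

lemma continuousOn_logRatioGap (c : ℝ) {μ : ℝ} (hμ : 0 < μ) :
    ContinuousOn (logRatioGap c μ) (Set.Ico 0 μ) := fun v hv =>
  (hasDerivAt_logRatioGap (by linarith [hv.1]) (by linarith [hv.2])).continuousAt.continuousWithinAt

lemma strictAntiOn_logRatioGap {c μ a : ℝ} (hμ : 0 < μ) (haμ : a < μ)
    (ha : a ^ 2 = μ ^ 2 - 2 * c * μ) : StrictAntiOn (logRatioGap c μ) (Set.Icc 0 a) := by
  refine strictAntiOn_of_deriv_neg (convex_Icc 0 a)
    ((continuousOn_logRatioGap c hμ).mono fun v hv => ⟨hv.1, hv.2.trans_lt haμ⟩) fun v hv => ?_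
  rw [interior_Icc] at hv
  obtain ⟨h0, hva⟩ := hv
  rw [(hasDerivAt_logRatioGap (by linarith) (by linarith)).deriv, ← ha]
  exact div_neg_of_neg_of_pos (by nlinarith) (by nlinarith)

lemma strictMonoOn_logRatioGap {c μ a : ℝ} (hμ : 0 < μ) (ha0 : 0 ≤ a)
    (ha : a ^ 2 = μ ^ 2 - 2 * c * μ) : StrictMonoOn (logRatioGap c μ) (Set.Ico a μ) := by
  refine strictMonoOn_of_deriv_pos (convex_Ico a μ)
    ((continuousOn_logRatioGap c hμ).mono fun v hv => ⟨ha0.trans hv.1, hv.2⟩) fun v hv => ?_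
  rw [interior_Ico] at hv
  obtain ⟨hav, hvμ⟩ := hv
  rw [(hasDerivAt_logRatioGap (by linarith) (by linarith)).deriv, ← ha]
  exact div_pos (by nlinarith) (by nlinarith)

lemma exists_logRatioGap_pos {c μ : ℝ} (hc : 0 < c) (hμ : 0 < μ) :
    ∃ v ∈ Set.Ioo 0 μ, 0 < logRatioGap c μ v := by
  set t := Real.exp (-(μ / c)) with ht
  have ht0 : 0 < t := Real.exp_pos _
  have ht1 : t < 1 :=
    Real.exp_lt_one_iff.2 <| neg_lt_zero.2 (div_pos hμ hc)
  have hμt : 0 < μ * t := mul_pos hμ ht0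
  refine ⟨μ - μ * t, ⟨by nlinarith, by linarith⟩, ?_⟩
  have hlog : Real.log μ < Real.log (μ + (μ - μ * t)) := Real.log_lt_log hμ (by nlinarith)
  have hlog' : Real.log (μ - (μ - μ * t)) = Real.log μ - μ / c := by
    rw [sub_sub_cancel, Real.log_mul hμ.ne' ht0.ne', ht, Real.log_exp, sub_eq_add_neg]
  have hle : c * (μ / c) < c * (Real.log (μ + (μ - μ * t)) - Real.log (μ - (μ - μ * t))) :=
    mul_lt_mul_of_pos_left (by linarith) hc
  rw [mul_div_cancel₀ _ hc.ne'] at hle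
  unfold logRatioGap
  linarith

lemma existsUnique_logRatioGap_eq_zero {c μ : ℝ} (hc : 0 < c) (hcμ : 2 * c < μ) :
    ∃! v : ℝ, v ∈ Set.Ioo 0 μ ∧ logRatioGap c μ v = 0 := by
  have hμ : 0 < μ := by linarith
  have hpos : 0 < μ ^ 2 - 2 * c * μ := by nlinarith
  obtain ⟨a, ha0, ha⟩ : ∃ a, 0 < a ∧ a ^ 2 = μ ^ 2 - 2 * c * μ :=
    ⟨_, Real.sqrt_pos.2 hpos, Real.sq_sqrt hpos.le⟩
  have haμ : a < μ := by nlinarith [mul_pos hc hμ]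
  have hneg : ∀ v, 0 < v → v ≤ a → logRatioGap c μ v < 0 := fun v h0 hva => by
    simpa [logRatioGap] using
      strictAntiOn_logRatioGap hμ haμ ha ⟨le_rfl, ha0.le⟩ ⟨h0.le, hva⟩ h0
  obtain ⟨b, ⟨hb0, hbμ⟩, hb⟩ := exists_logRatioGap_pos hc hμ
  have hab : a ≤ b := le_of_not_ge fun hba => (hneg b hb0 hba).not_gt hb
  obtain ⟨v, hv, hv0⟩ := intermediate_value_Icc hab
    ((continuousOn_logRatioGap c hμ).mono fun x hx => ⟨ha0.le.trans hx.1, hx.2.trans_lt hbμ⟩)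
    ⟨(hneg a ha0 le_rfl).le, hb.le⟩
  have hvμ : v < μ := hv.2.trans_lt hbμ
  refine ⟨v, ⟨⟨ha0.trans_le hv.1, hvμ⟩, hv0⟩, ?_⟩
  rintro w ⟨⟨hw0, hwμ⟩, hw⟩
  have haw : a ≤ w := le_of_not_ge fun hwa => (hneg w hw0 hwa).ne hw
  exact (strictMonoOn_logRatioGap hμ ha0.le ha).injOn ⟨haw, hwμ⟩ ⟨hv.1, hvμ⟩ (hw.trans hv0.symm)

theorem stmt_12 (μ σ L : ℝ) (hμ : 0 < μ) (hσ : 0 < σ) (hL : 0 < L) (h : σ ^ 2 < μ * L) :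
    ∃! v : ℝ, v ∈ Set.Ioo 0 μ ∧ (σ ^ 2 / (2 * L)) * Real.log ((μ + v) / (μ - v)) = v := by
  have hc : 0 < σ ^ 2 / (2 * L) := by positivity
  have hcμ : 2 * (σ ^ 2 / (2 * L)) < μ := by
    rw [← mul_div_assoc, mul_div_mul_left _ _ two_ne_zero]
    exact (div_lt_iff₀ hL).2 h
  refine (existsUnique_congr fun v => and_congr_right fun hv => ?_).1
    (existsUnique_logRatioGap_eq_zero hc hcμ)
  rw [Real.log_div (by linarith [hv.1]) (by linarith [hv.2]), logRatioGap, sub_eq_zero]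
end
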